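/- arXiv:0906.5491 — 2 statements merged into one kernel-verified Lean document; each statement's English description precedes it below -/
import Mathlib

section
/- Let G = ⟨x, y | x y² x⁻¹ = y³⟩ and let π : F(a,b) → G be the epimorphism from the free group on two generators a, b determined by a ↦ x and b ↦ y⁴. Then there is no single element w ∈ F(a,b) whose normal closure in F(a,b) equals ker π; in other words, the generating set {x, y⁴} does not support a one-relator presentation of G. -/
/-- The single relator `x y² x⁻¹ y⁻³` in the free group on two generators. -/
def bsRels : Set (FreeGroup (Fin 2)) :=
  {FreeGroup.of 0 * FreeGroup.of 1 ^ 2 * (FreeGroup.of 0)⁻¹ * (FreeGroup.of 1 ^ 3)⁻¹}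

/-- The Baumslag–Solitar group `G = ⟨x, y | x y² x⁻¹ = y³⟩`. -/
abbrev BSGroup := PresentedGroup bsRels

/-- `x ∈ G`. -/
def bsX : BSGroup := PresentedGroup.of 0

/-- `y ∈ G`. -/
def bsY : BSGroup := PresentedGroup.of 1

/-- The epimorphism `π : F(a,b) → G`, `a ↦ x`, `b ↦ y⁴`. -/
def bsPi : FreeGroup (Fin 2) →* BSGroup :=
  FreeGroup.lift (fun i => if i = 0 then bsX else bsY ^ 4)

namespace BSProof

/-- Triples `(g, d, e)`: a unit together with two Fox derivatives. -/
@[ext]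
structure Aff (R : Type*) [Ring R] where
  g : Rˣ
  d : R
  e : R

section Aff

variable {R : Type*} [Ring R]

instance : Mul (Aff R) := ⟨fun s t => ⟨s.g * t.g, s.d + s.g * t.d, s.e + s.g * t.e⟩⟩
instance : One (Aff R) := ⟨⟨1, 0, 0⟩⟩
instance : Inv (Aff R) := ⟨fun s => ⟨s.g⁻¹, -(↑(s.g⁻¹) * s.d), -(↑(s.g⁻¹) * s.e)⟩⟩

@[simp] lemma mul_g (s t : Aff R) : (s * t).g = s.g * t.g := rfl
@[simp] lemma mul_d (s t : Aff R) : (s * t).d = s.d + s.g * t.d := rfl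
@[simp] lemma mul_e (s t : Aff R) : (s * t).e = s.e + s.g * t.e := rfl
@[simp] lemma one_g : (1 : Aff R).g = 1 := rfl
@[simp] lemma one_d : (1 : Aff R).d = 0 := rfl
@[simp] lemma one_e : (1 : Aff R).e = 0 := rfl
@[simp] lemma inv_g (s : Aff R) : (s⁻¹).g = s.g⁻¹ := rfl
@[simp] lemma inv_d (s : Aff R) : (s⁻¹).d = -(↑(s.g⁻¹) * s.d) := rfl
@[simp] lemma inv_e (s : Aff R) : (s⁻¹).e = -(↑(s.g⁻¹) * s.e) := rfl

instance : Group (Aff R) := Group.ofLeftAxioms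
  (by intro a b c; ext <;> simp [mul_assoc, mul_add, add_assoc])
  (by intro a; ext <;> simp)
  (by intro a; ext <;> simp)

/-- Rescaling the second derivative. -/
def scale (s : R) : Aff R →* Aff R where
  toFun t := ⟨t.g, t.d, t.e * s⟩
  map_one' := by ext <;> simp
  map_mul' a b := by ext <;> simp [add_mul, mul_assoc]

lemma normalClosure_der {F : Type*} [Group F] (f : F →* Aff R) (w : F) (hg : (f w).g = 1)
    {l : F} (hl : l ∈ Subgroup.normalClosure {w}) :
    (f l).g = 1 ∧ ∃ c : R, (f l).d = c * (f w).d ∧ (f l).e = c * (f w).e := by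
  let S : Subgroup F :=
    { carrier := {l | (f l).g = 1 ∧ ∃ c : R, (f l).d = c * (f w).d ∧ (f l).e = c * (f w).e}
      one_mem' := by
        refine ⟨by simp, 0, by simp, by simp⟩
      mul_mem' := by
        rintro a b ⟨ha, c, h1, h2⟩ ⟨hb, c', h1', h2'⟩
        refine ⟨by simp [ha, hb], c + c', ?_, ?_⟩
        · simp [ha, h1, h1', add_mul]
        · simp [ha, h2, h2', add_mul]
      inv_mem' := by
        rintro a ⟨ha, c, h1, h2⟩
        refine ⟨by simp [ha], -c, ?_, ?_⟩
        · simp [ha, h1]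
        · simp [ha, h2] }
  have hS : S.Normal := by
    constructor
    rintro n ⟨hn, c, h1, h2⟩ k
    refine ⟨by simp [hn], (f k).g * c, ?_, ?_⟩
    · simp [hn, h1, mul_assoc, mul_add]
    · simp [hn, h2, mul_assoc, mul_add]
  have : Subgroup.normalClosure {w} ≤ S := by
    apply Subgroup.normalClosure_le_normal
    rintro _ rfl
    exact ⟨hg, 1, by simp, by simp⟩
  exact this hl

/-- the substitution `a ↦ x`, `b ↦ y⁴` on free groups -/
def theta : FreeGroup (Fin 2) →* FreeGroup (Fin 2) :=
  FreeGroup.lift (fun i => if i = 0 then FreeGroup.of 0 else FreeGroup.of 1 ^ 4)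

lemma bsPi_eq : bsPi = (PresentedGroup.mk bsRels).comp theta := by
  ext i
  fin_cases i
  · simp [bsPi, theta, bsX, PresentedGroup.of]
  · simp [bsPi, theta, bsY, PresentedGroup.of]

lemma bs_rel : bsX * bsY ^ 2 * bsX⁻¹ = bsY ^ 3 := by
  have := PresentedGroup.one_of_mem (rels := bsRels) rfl
  rw [map_mul, map_inv, mul_inv_eq_one] at this
  simpa [bsX, bsY, PresentedGroup.of] using this

/-- free generators -/
abbrev ga : FreeGroup (Fin 2) := FreeGroup.of 0
abbrev gb : FreeGroup (Fin 2) := FreeGroup.of 1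
def z0 : FreeGroup (Fin 2) := gb⁻¹ * ga * gb * ga⁻¹
def z1 : FreeGroup (Fin 2) := ga * z0 * ga⁻¹
def kk : FreeGroup (Fin 2) := z1 * gb * z1⁻¹ * gb⁻¹
def r1 : FreeGroup (Fin 2) := gb ^ 3 * ga * (gb ^ 2)⁻¹ * ga⁻¹

lemma pi_a : bsPi ga = bsX := by simp [bsPi]
lemma pi_b : bsPi gb = bsY ^ 4 := by simp [bsPi]

lemma bs_conj (n : ℕ) : bsX * bsY ^ (2 * n) * bsX⁻¹ = bsY ^ (3 * n) := by
  rw [pow_mul, pow_mul, ← bs_rel, conj_pow]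

lemma r1_mem : r1 ∈ bsPi.ker := by
  rw [MonoidHom.mem_ker]
  have h : bsX * (bsY ^ 8)⁻¹ * bsX⁻¹ = (bsY ^ 12)⁻¹ := by
    rw [← bs_conj 4]; group
  simp only [r1, map_mul, map_pow, map_inv, pi_a, pi_b]
  have e1 : ((bsY ^ 4) ^ 2) = bsY ^ 8 := by rw [← pow_mul]
  have e2 : ((bsY ^ 4) ^ 3) = bsY ^ 12 := by rw [← pow_mul]
  rw [e1, e2, mul_assoc, mul_assoc, ← mul_assoc bsX, h, mul_inv_cancel]

lemma pi_z0 : bsPi z0 = bsY ^ 2 := by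
  simp only [z0, map_mul, map_inv, pi_a, pi_b]
  have h := bs_conj 2
  norm_num at h
  rw [mul_assoc, mul_assoc, ← mul_assoc bsX, h]
  group

lemma pi_z1 : bsPi z1 = bsY ^ 3 := by
  simp only [z1, map_mul, map_inv, pi_z0, pi_a, bs_rel]

lemma kk_mem : kk ∈ bsPi.ker := by
  rw [MonoidHom.mem_ker]
  rw [kk, map_mul, map_mul, map_mul, map_inv, map_inv, pi_z1, pi_b]
  group

lemma key (X Y : Rˣ) (h : X * Y ^ 2 = Y ^ 3 * X) (w : FreeGroup (Fin 2))
    (hw : Subgroup.normalClosure {w} = bsPi.ker) :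
    ∃ p q c c1 c2 : R, p = c * (1 - (Y : R) ^ 3) ∧
      q * (1 + (Y : R) + Y ^ 2 + Y ^ 3) = c * (X * (1 + Y) - (1 + Y + Y ^ 2)) ∧
      c1 * p = (Y : R) ^ 12 - 1 ∧
      c2 * p = (1 - (Y : R) ^ 4) * (1 - Y ^ 3 + X * (((Y ^ 4)⁻¹ : Rˣ) - (Y : R) ^ 2)) := by
  have h' : (X : R) * Y ^ 2 = Y ^ 3 * X := by exact_mod_cast congrArg Units.val h
  let Psi : FreeGroup (Fin 2) →* Aff R :=
    FreeGroup.lift (fun i => if i = 0 then ⟨X, 1, 0⟩ else ⟨Y, 0, 1⟩)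
  let Phi : FreeGroup (Fin 2) →* Aff R :=
    FreeGroup.lift (fun i => if i = 0 then ⟨X, 1, 0⟩ else ⟨Y ^ 4, 0, 1⟩)
  have Pa : Psi ga = ⟨X, 1, 0⟩ := by simp [Psi]
  have Pb : Psi gb = ⟨Y, 0, 1⟩ := by simp [Psi]
  have Qa : Phi ga = ⟨X, 1, 0⟩ := by simp [Phi]
  have Qb : Phi gb = ⟨Y ^ 4, 0, 1⟩ := by simp [Phi]
  have comp : Psi.comp theta = (scale (1 + (Y : R) + Y ^ 2 + Y ^ 3)).comp Phi := by
    apply FreeGroup.ext_hom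
    intro i
    fin_cases i
    · simp [theta, Pa, Qa, scale]
    · simp only [theta, MonoidHom.comp_apply, Qb, Fin.mk_one, FreeGroup.lift_apply_of]
      rw [if_neg (by decide), map_pow, Pb]
      ext <;> simp [pow_succ, scale, mul_add, mul_assoc, add_assoc]
  -- the relator
  let r : FreeGroup (Fin 2) := ga * gb ^ 2 * ga⁻¹ * (gb ^ 3)⁻¹
  have hr : r * gb ^ 3 * ga = ga * gb ^ 2 := by simp only [r]; group
  have hr2 : Psi r * (Psi gb) ^ 3 * Psi ga = Psi ga * Psi gb ^ 2 := by
    rw [← map_pow, ← map_pow, ← map_mul, ← map_mul, hr, map_mul]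
  rw [Pa, Pb] at hr2
  have hrg : (Psi r).g = 1 := by
    have := congrArg Aff.g hr2
    simp only [pow_succ, pow_zero, one_mul, mul_g] at this
    have h2 : (Psi r).g * (Y ^ 3 * X) = 1 * (Y ^ 3 * X) := by
      rw [one_mul]
      refine Eq.trans ?_ h
      simp only [pow_succ, pow_zero, one_mul, mul_assoc] at this ⊢
      exact this
    exact mul_right_cancel h2
  have hrd : (Psi r).d = 1 - (Y : R) ^ 3 := by
    have := congrArg Aff.d hr2
    simp [pow_succ, hrg] at this
    rw [eq_sub_iff_add_eq, pow_succ, pow_succ, pow_one]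
    simpa [mul_assoc] using this
  have hre : (Psi r).e = X * (1 + Y) - (1 + (Y : R) + Y ^ 2) := by
    have := congrArg Aff.e hr2
    simp [pow_succ, hrg] at this
    rw [eq_sub_iff_add_eq, pow_succ, pow_one]
    simpa [mul_assoc] using this
  have hker : ∀ l ∈ bsPi.ker, (Phi l).g = 1 ∧ ∃ c : R, (Phi l).d = c * (1 - (Y : R) ^ 3) ∧
      (Phi l).e * (1 + (Y : R) + Y ^ 2 + Y ^ 3) = c * (X * (1 + Y) - (1 + Y + Y ^ 2)) := by
    intro l hl
    rw [bsPi_eq, MonoidHom.mem_ker, MonoidHom.comp_apply, PresentedGroup.mk_eq_one_iff] at hl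
    obtain ⟨hg, c, h1, h2⟩ := normalClosure_der Psi r hrg hl
    have hc := DFunLike.congr_fun comp l
    simp only [MonoidHom.comp_apply] at hc
    rw [hc] at hg h1 h2
    refine ⟨hg, c, ?_, ?_⟩
    · rw [← hrd]; exact h1
    · rw [← hre]; exact h2
  have hwk : w ∈ bsPi.ker := hw ▸ Subgroup.subset_normalClosure rfl
  obtain ⟨hwg, c, hc1, hc2⟩ := hker w hwk
  obtain ⟨hg1, c1, hd1, -⟩ := normalClosure_der Phi w hwg (hw ▸ r1_mem)
  obtain ⟨hg2, c2, hd2, -⟩ := normalClosure_der Phi w hwg (hw ▸ kk_mem)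
  refine ⟨(Phi w).d, (Phi w).e, c, c1, c2, hc1, hc2, ?_, ?_⟩
  · rw [← hd1]
    have hh : r1 * ga * gb ^ 2 = gb ^ 3 * ga := by simp only [r1]; group
    have := congrArg (fun t => (Phi t).d) hh
    simp only [map_mul, map_pow, Qa, Qb] at this
    rw [eq_sub_iff_add_eq]
    simp only [mul_d, mul_g, pow_succ, pow_zero, one_mul] at this
    simpa [hg1, ← pow_add, pow_succ, mul_assoc] using this
  · rw [← hd2]
    have i1 : kk * (gb * z1) = z1 * gb := by simp only [kk]; group
    have i2 : z1 * ga = ga * z0 := by simp only [z1]; group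
    have i3 : gb * (z0 * ga) = ga * gb := by simp only [z0]; group
    have g3 : (Phi z0).g = Y ^ 2 := by
      have := congrArg (fun t => (Phi t).g) i3
      simp only [map_mul, Qa, Qb, mul_g] at this
      have e : X * Y ^ 4 = Y ^ 4 * (Y ^ 2 * X) := by
        calc X * Y ^ 4 = X * Y ^ 2 * Y ^ 2 := by group
          _ = Y ^ 3 * (X * Y ^ 2) := by rw [h, mul_assoc, h]
          _ = Y ^ 4 * (Y ^ 2 * X) := by rw [h]; group
      rw [e] at this
      exact mul_right_cancel (mul_left_cancel this)
    have g2 : (Phi z1).g = Y ^ 3 := by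
      have := congrArg (fun t => (Phi t).g) i2
      simp only [map_mul Phi z1, map_mul Phi ga, Qa, mul_g, g3, h] at this
      exact mul_right_cancel this
    have d3 : (Phi z0).d = ((Y ^ 4)⁻¹ : Rˣ) - (Y : R) ^ 2 := by
      have := congrArg (fun t => (Phi t).d) i3
      simp only [map_mul Phi gb, map_mul Phi z0, map_mul Phi ga, Qa, Qb, mul_d, g3] at this
      have h5 : ((Y ^ 4 : Rˣ) : R) * ((Phi z0).d + (Y : R) ^ 2) = 1 := by simpa using this
      rw [eq_sub_iff_add_eq]
      exact Units.eq_inv_of_mul_eq_one_left h5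
    have d2 : (Phi z1).d = 1 - (Y : R) ^ 3 + X * (Phi z0).d := by
      have := congrArg (fun t => (Phi t).d) i2
      simp only [map_mul Phi z1, map_mul Phi ga, Qa, mul_d, g2] at this
      rw [sub_add_eq_add_sub, eq_sub_iff_add_eq]
      simpa using this
    have := congrArg (fun t => (Phi t).d) i1
    simp only [map_mul Phi kk, map_mul Phi z1, map_mul Phi gb, Qb, mul_d, hg2] at this
    rw [← d3, ← d2, sub_mul, one_mul, eq_sub_iff_add_eq]
    simpa using this

end Aff

section Skew

open SkewMonoidAlgebra

variable {A : Type*} [CommRing A] [IsDomain A] [MulSemiringAction (Multiplicative ℤ) A]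

local notation "T" => Multiplicative ℤ

lemma smul_ne_zero_act (t : T) {a : A} (ha : a ≠ 0) : t • a ≠ 0 := by
  intro h
  apply ha
  have := congrArg (fun b => t⁻¹ • b) h
  simpa using this

lemma coeff_unique (u p : SkewMonoidAlgebra A T) (s t : T) (hs : s ∈ u.support)
    (ht : t ∈ p.support) (h : UniqueMul u.support p.support s t) :
    (u * p).coeff (s * t) ≠ 0 := by
  classical
  have : (u * p).coeff (s * t) = u.coeff s * s • p.coeff t := by
    rw [coeff_mul, sum_def', Finset.sum_eq_single s, sum_def', Finset.sum_eq_single t]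
    · simp
    · intro b hb hbt
      rw [if_neg]
      intro e
      exact hbt (h hs hb e).2
    · intro h; exact absurd ht h
    · intro b hb hbs
      rw [sum_def']
      apply Finset.sum_eq_zero
      intro b' hb'
      rw [if_neg]
      intro e
      exact hbs (h hb hb' e).1
    · intro h; exact absurd hs h
  rw [this]
  exact mul_ne_zero (mem_support_iff.mp hs) (smul_ne_zero_act _ (mem_support_iff.mp ht))

lemma homog (u p : SkewMonoidAlgebra A T) (f : A) (hf : f ≠ 0) (h : u * p = single 1 f) :
    ∃ j : T, ∀ t, t ≠ j → p.coeff t = 0 := by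
  classical
  have hu : u.support.Nonempty := by
    rw [Finset.nonempty_iff_ne_empty, Ne, support_eq_empty]
    rintro rfl
    rw [zero_mul] at h
    exact hf (single_eq_zero.mp h.symm)
  by_contra hcon
  push Not at hcon
  obtain ⟨t1, -, ht1⟩ := hcon 1
  obtain ⟨t2, ht12, ht2⟩ := hcon t1
  have hp : 1 < p.support.card :=
    Finset.one_lt_card.mpr ⟨t1, mem_support_iff.mpr ht1, t2, mem_support_iff.mpr ht2, ht12.symm⟩
  have hcard : 1 < u.support.card * p.support.card := by
    have := hu.card_pos
    nlinarith
  obtain ⟨p1, h1, p2, h2, hne, u1, u2⟩ := TwoUniqueProds.uniqueMul_of_one_lt_card hcard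
  rw [Finset.mem_product] at h1 h2
  have n1 := coeff_unique u p p1.1 p1.2 h1.1 h1.2 u1
  have n2 := coeff_unique u p p2.1 p2.2 h2.1 h2.2 u2
  rw [h, coeff_single_apply] at n1 n2
  have e1 : 1 = p1.1 * p1.2 := by by_contra e; simp [e] at n1
  have e2 : 1 = p2.1 * p2.2 := by by_contra e; simp [e] at n2
  have := u1 h2.1 h2.2 (e2.symm.trans e1)
  exact hne (Prod.ext this.1.symm this.2.symm)

theorem main_abs (y : Aˣ) (hy : (Multiplicative.ofAdd (1 : ℤ) • (y : A)) ^ 2 = (y : A) ^ 3)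
    (hy12 : (y : A) ^ 12 ≠ 1)
    (hnd : ¬ (1 - (y : A) ^ 6) ∣ (1 - (y : A) ^ 4) * (1 - (y : A) ^ 3)) (w : FreeGroup (Fin 2))
    (hw : Subgroup.normalClosure {w} = bsPi.ker) : False := by
  classical
  let x : T := Multiplicative.ofAdd (1 : ℤ)
  let ι : A →+* SkewMonoidAlgebra A T := singleOneRingHom
  have hι : ∀ a, ι a = single 1 a := fun _ => rfl
  let Y : (SkewMonoidAlgebra A T)ˣ := Units.map (ι : A →* SkewMonoidAlgebra A T) y
  let X : (SkewMonoidAlgebra A T)ˣ := Units.map (of A T) (toUnits x)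
  have hY : (Y : SkewMonoidAlgebra A T) = ι y := rfl
  have hX : (X : SkewMonoidAlgebra A T) = single x 1 := rfl
  have hrel : X * Y ^ 2 = Y ^ 3 * X := by
    ext1
    push_cast
    rw [hY, hX, ← map_pow, ← map_pow, hι, hι, single_mul_single, single_mul_single]
    simp only [smul_pow', one_mul, mul_one, one_smul, x, hy]
  obtain ⟨p, q, c, c1, c2, h1, h2, h3, h4⟩ := key X Y hrel w hw
  have hYi : ((Y ^ 4)⁻¹ : (SkewMonoidAlgebra A T)ˣ) =
      Units.map (ι : A →* SkewMonoidAlgebra A T) ((y ^ 4)⁻¹) := by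
    simp [Y]
  have hYi' : (((Y ^ 4)⁻¹ : (SkewMonoidAlgebra A T)ˣ) : SkewMonoidAlgebra A T)
      = ι (((y ^ 4)⁻¹ : Aˣ) : A) := by rw [hYi]; rfl
  rw [hYi'] at h4
  rw [hY] at h1 h2 h3 h4
  rw [hX] at h2 h4
  have hy3 : 1 - (y : A) ^ 3 ≠ 0 := by
    intro h
    apply hy12
    linear_combination (-(1 + (y : A) ^ 3 + y ^ 6 + y ^ 9)) * h
  have hy1 : 1 + (y : A) ≠ 0 := by
    intro h
    apply hy12
    linear_combination (((y : A) - 1) * (1 + (y : A) ^ 2 + y ^ 4 + y ^ 6 + y ^ 8 + y ^ 10)) * h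
  obtain ⟨j, hj⟩ := homog c1 p ((y : A) ^ 12 - 1) (sub_ne_zero.mpr hy12)
    (by rw [h3, ← hι]; simp)
  have pc : ∀ t, p.coeff t = c.coeff t * t • (1 - (y : A) ^ 3) := by
    intro t
    have : p = c * single 1 (1 - (y : A) ^ 3) := by rw [h1, ← hι]; simp
    rw [this, coeff_mul_single_one]
  have hcj : ∀ t, t ≠ j → c.coeff t = 0 := by
    intro t ht
    have := hj t ht
    rw [pc] at this
    exact (mul_eq_zero.mp this).resolve_right (smul_ne_zero_act _ hy3)
  have hjx : j * x ≠ j := by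
    intro h
    have : x = 1 := by simpa using h
    simp [x] at this
  have hq : c.coeff j = q.coeff (j * x) * (j • (1 + (y : A) ^ 3)) := by
    have e : q * single 1 ((1 + (y : A)) * (1 + (y : A) ^ 2))
        = c * single x 1 * single 1 (1 + (y : A)) - c * single 1 (1 + (y : A) + y ^ 2) := by
      have e1 : single 1 ((1 + (y : A)) * (1 + (y : A) ^ 2)) =
          1 + ι y + ι y ^ 2 + ι y ^ 3 := by
        rw [← hι]; simp only [map_mul, map_add, map_one, map_pow]; noncomm_ring
      have e2 : single 1 (1 + (y : A)) = 1 + ι y := by rw [← hι]; simp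
      have e3 : single 1 (1 + (y : A) + y ^ 2) = 1 + ι y + ι y ^ 2 := by rw [← hι]; simp
      rw [e1, e2, e3, h2, mul_assoc, mul_sub]
    have e' := congrArg (fun s => s.coeff (j * x)) e
    simp only [coeff_sub, Finsupp.sub_apply, coeff_mul_single, inv_one, hcj _ hjx,
      mul_inv_cancel_right, smul_one, mul_one, zero_mul, sub_zero] at e'
    have k1 : (j * x) • (1 + (y : A)) ≠ 0 := smul_ne_zero_act _ hy1
    have k2 : (j * x) • (1 + (y : A) ^ 2) = j • (1 + (y : A) ^ 3) := by
      rw [mul_smul, smul_add, smul_pow', smul_one]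
      simp only [x, hy]
    rw [smul_mul', k2] at e'
    apply mul_right_cancel₀ k1
    rw [← e']; ring
  have hp : p = single j (q.coeff (j * x)) * single 1 (1 - (y : A) ^ 6) := by
    ext t
    rw [coeff_mul_single_one, coeff_single_apply]
    by_cases ht : t = j
    · subst ht
      rw [pc, hq, if_pos rfl, mul_assoc, ← smul_mul']
      congr 2
      ring
    · rw [hj t ht, if_neg (Ne.symm ht), zero_mul]
  apply hnd
  rw [hp, ← mul_assoc] at h4
  have e4 : (1 - ι y ^ 4) * (1 - ι y ^ 3 + single x 1 * (ι (((y ^ 4)⁻¹ : Aˣ) : A) - ι y ^ 2))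
      = single 1 ((1 - (y : A) ^ 4) * (1 - (y : A) ^ 3)) +
        single 1 (1 - (y : A) ^ 4) * (single x 1 * single 1 ((((y ^ 4)⁻¹ : Aˣ) : A) - y ^ 2)) := by
    rw [← hι, ← hι, ← hι, mul_add]; simp only [map_mul, map_sub, map_one, map_pow]
  rw [e4] at h4
  have e5 := congrArg (fun s => s.coeff 1) h4
  simp only [coeff_add, Finsupp.add_apply, coeff_mul_single_one, one_smul, single_mul_single] at e5
  rw [coeff_single_apply, coeff_single_apply, if_pos rfl, if_neg (by simp [x]), add_zero] at e5
  rw [← e5]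
  exact Dvd.intro_left _ rfl

end Skew

section Inst

/-- multiplication by 3/2 on ℚ -/
def mulEq : ℚ ≃+ ℚ where
  toFun q := 3 / 2 * q
  invFun q := 2 / 3 * q
  left_inv q := by ring
  right_inv q := by ring
  map_add' a b := by ring

abbrev AA := AddMonoidAlgebra ℤ ℚ

noncomputable def sig : RingAut AA := (AddMonoidAlgebra.domCongr ℤ ℤ mulEq).toRingEquiv

noncomputable def S (t : ℚ) : AA := AddMonoidAlgebra.single t 1

lemma sig_S (t : ℚ) : sig (S t) = S (3 / 2 * t) := by
  change AddMonoidAlgebra.domCongr ℤ ℤ mulEq (AddMonoidAlgebra.single t 1) = _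
  rw [AddMonoidAlgebra.domCongr_single]
  rfl

lemma hS (s t : ℚ) : S s * S t = S (s + t) := by
  simp [S, AddMonoidAlgebra.single_mul_single]

lemma hSp (s : ℚ) (n : ℕ) : S s ^ n = S (n * s) := by
  simp [S, AddMonoidAlgebra.single_pow]

lemma hS0 : S 0 = 1 := rfl

lemma S_inj {s t : ℚ} (h : S s = S t) : s = t :=
  AddMonoidAlgebra.of_injective (R := ℤ) (M := ℚ) (a₁ := Multiplicative.ofAdd s)
    (a₂ := Multiplicative.ofAdd t) h

noncomputable def yy : AAˣ :=
  ⟨S 1, S (-1), by rw [hS, add_neg_cancel, hS0], by rw [hS, neg_add_cancel, hS0]⟩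

noncomputable def chi : Multiplicative ℚ →* ℂ where
  toFun := fun t => Complex.exp (2 * Real.pi * Complex.I * ((t.toAdd : ℚ) : ℂ) / 6)
  map_one' := by simp
  map_mul' := by
    intro a b
    rw [← Complex.exp_add]
    congr 1
    simp
    ring

noncomputable def ev : AA →ₐ[ℤ] ℂ := AddMonoidAlgebra.lift ℤ ℂ ℚ chi

lemma ev_S : ev (S 1) = Complex.exp (2 * Real.pi * Complex.I / 6) := by
  simp [ev, S, chi, AddMonoidAlgebra.lift_single]

lemma ev_prim : IsPrimitiveRoot (ev (S 1)) 6 := by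
  rw [ev_S]
  exact_mod_cast Complex.isPrimitiveRoot_exp 6 (by norm_num)

end Inst

end BSProof

open BSProof in
/-- There is no single element of `F(a,b)` whose normal closure is `ker π`:
the generating set `{x, y⁴}` of `G = ⟨x, y | x y² x⁻¹ = y³⟩` does not support
a one-relator presentation. -/
theorem no_one_relator_presentation_on_x_y4 :
    ¬ ∃ w : FreeGroup (Fin 2), Subgroup.normalClosure {w} = bsPi.ker := by
  rintro ⟨w, hw⟩
  let act : MulSemiringAction (Multiplicative ℤ) AA :=
    MulSemiringAction.compHom AA (zpowersHom (RingAut AA) sig)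
  have hyv : (yy : AA) = S 1 := rfl
  refine @main_abs AA _ _ act yy ?_ ?_ ?_ w hw
  · have : (Multiplicative.ofAdd (1 : ℤ) • (yy : AA)) = S (3 / 2) := by
      change (zpowersHom (RingAut AA) sig (Multiplicative.ofAdd 1)) (S 1) = _
      rw [zpowersHom_apply, toAdd_ofAdd, zpow_one, sig_S, mul_one]
    rw [this, hyv, hSp, hSp]
    norm_num
  · rw [hyv, hSp, ← hS0]
    intro h
    have := S_inj h
    norm_num at this
  · rw [hyv]
    rintro ⟨d, hd⟩
    have h := congrArg ev hd
    simp only [map_mul, map_sub, map_one, map_pow, ev_prim.pow_eq_one, sub_self, zero_mul,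
      mul_eq_zero, sub_eq_zero] at h
    rcases h with h | h
    · exact ev_prim.pow_ne_one_of_pos_of_lt (by norm_num) (by norm_num) h.symm
    · exact ev_prim.pow_ne_one_of_pos_of_lt (by norm_num) (by norm_num) h.symm
end

section
/- Let G = ⟨x, y | x y² x⁻¹ = y³⟩ and let Ḡ = ⟨x, z | z = [x,z]² ⟩ (where [x,z] = x z x⁻¹ z⁻¹). The map x ↦ x, z ↦ y⁴ induces an epimorphism Ḡ → G, and its kernel K is nontrivial and is a free group. -/
open scoped commutatorElement

/-- The single relator `z ([x,z]²)⁻¹` in the free group on two generators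
(generator `0` plays the role of `x`, generator `1` the role of `z`). -/
def gbarRels : Set (FreeGroup (Fin 2)) :=
  {FreeGroup.of 1 * (⁅(FreeGroup.of 0 : FreeGroup (Fin 2)), FreeGroup.of 1⁆ ^ 2)⁻¹}

/-- The group `Ḡ = ⟨x, z | z = [x,z]²⟩`. -/
abbrev GBar := PresentedGroup gbarRels

theorem bs_rel : bsX * bsY ^ 2 = bsY ^ 3 * bsX := by
  have h : PresentedGroup.mk bsRels (FreeGroup.of 0 * FreeGroup.of 1 ^ 2 * (FreeGroup.of 0)⁻¹ * (FreeGroup.of 1 ^ 3)⁻¹) = 1 :=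
    (QuotientGroup.eq_one_iff _).2 (Subgroup.subset_normalClosure rfl)
  simp only [map_mul, map_inv, map_pow] at h
  have h2 : bsX * bsY ^ 2 * bsX⁻¹ * (bsY ^ 3)⁻¹ = 1 := h
  rw [mul_inv_eq_one, mul_inv_eq_iff_eq_mul] at h2
  exact h2

theorem bs_lift {H : Type*} [Group H] (a b : H) (h : a * b ^ 2 = b ^ 3 * a) :
    ∃ f : BSGroup →* H, f bsX = a ∧ f bsY = b := by
  refine ⟨PresentedGroup.toGroup (f := ![a, b]) ?_, ?_, ?_⟩
  · rintro r rfl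
    simp [h]
  · simp [bsX]
  · simp [bsY]

theorem bs_hom_ext {H : Type*} [Group H] {f g : BSGroup →* H} (hx : f bsX = g bsX)
    (hy : f bsY = g bsY) : f = g := by
  apply PresentedGroup.ext
  intro i
  fin_cases i
  · exact hx
  · exact hy

theorem bs_rel_zpow (n : ℤ) : bsX * (bsY ^ (2 * n)) = bsY ^ (3 * n) * bsX := by
  have h : SemiconjBy bsX (bsY ^ 2) (bsY ^ 3) := bs_rel
  have := h.zpow_right n
  rw [← zpow_natCast, ← zpow_natCast, ← zpow_mul, ← zpow_mul] at this
  exact this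

/-! ### HNN model -/

abbrev Zm := Multiplicative ℤ

theorem pow_inj_Zm (k : ℕ) (hk : k ≠ 0) : Function.Injective (powMonoidHom k : Zm →* Zm) := by
  intro a b h
  have h' : k • (Multiplicative.toAdd a) = k • (Multiplicative.toAdd b) := h
  apply Multiplicative.toAdd.injective
  simpa [hk] using h'

noncomputable def hnnIso : (powMonoidHom 2 : Zm →* Zm).range ≃* (powMonoidHom 3 : Zm →* Zm).range :=
  (MonoidHom.ofInjective (pow_inj_Zm 2 (by norm_num))).symm.trans
    (MonoidHom.ofInjective (pow_inj_Zm 3 (by norm_num)))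

theorem hnnIso_apply (a : Zm) : hnnIso ⟨a ^ 2, a, rfl⟩ = ⟨a ^ 3, a, rfl⟩ := by
  have : (⟨a ^ 2, a, rfl⟩ : (powMonoidHom 2 : Zm →* Zm).range) =
    MonoidHom.ofInjective (pow_inj_Zm 2 (by norm_num)) a := rfl
  rw [this, hnnIso, MulEquiv.trans_apply, MulEquiv.symm_apply_apply]
  rfl

abbrev HN := HNNExtension Zm _ _ hnnIso

noncomputable def hy : HN := HNNExtension.of (Multiplicative.ofAdd 1)
noncomputable def hx : HN := HNNExtension.t

theorem hn_rel : hx * hy ^ 2 = hy ^ 3 * hx := by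
  have := HNNExtension.t_mul_of (φ := hnnIso) ⟨(Multiplicative.ofAdd 1) ^ 2, _, rfl⟩
  rw [hnnIso_apply] at this
  simpa [hx, hy, map_pow] using this

theorem hy_zpow (n : ℤ) (h : hy ^ n = 1) : n = 0 := by
  rw [hy, ← map_zpow, ← map_one HNNExtension.of] at h
  have h2 := HNNExtension.of_injective _ h
  have h3 : n • (1 : ℤ) = 0 := h2
  simpa using h3

theorem bsY_zpow (n : ℤ) (h : bsY ^ n = 1) : n = 0 := by
  obtain ⟨f, -, hfy⟩ := bs_lift hx hy hn_rel
  apply hy_zpow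
  rw [← hfy, ← map_zpow, h, map_one]

theorem not_mem_range (k : ℕ) (hk : 1 < k) (a : Zm) (ha : a = Multiplicative.ofAdd 1 ∨ a = Multiplicative.ofAdd (-1)) :
    a ∉ (powMonoidHom k : Zm →* Zm).range := by
  rintro ⟨b, hb⟩
  have h : k • (Multiplicative.toAdd b) = Multiplicative.toAdd a := congrArg Multiplicative.toAdd hb
  have hd : (k : ℤ) ∣ 1 := by
    rcases ha with rfl | rfl
    · exact ⟨Multiplicative.toAdd b, by simpa using h.symm⟩
    · exact ⟨- Multiplicative.toAdd b, by simp at h; linarith⟩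
  have := Int.le_of_dvd one_pos hd
  omega

theorem bs_ne : (bsX * bsY * bsX⁻¹) * bsY * (bsX * bsY⁻¹ * bsX⁻¹) * bsY⁻¹ ≠ 1 := by
  intro h
  obtain ⟨f, hfx, hfy⟩ := bs_lift hx hy hn_rel
  have h2 := congrArg f h
  simp only [map_mul, map_inv, hfx, hfy, map_one] at h2
  let w : HNNExtension.NormalWord.ReducedWord Zm (powMonoidHom 2 : Zm →* Zm).range (powMonoidHom 3 : Zm →* Zm).range :=
    { head := 1
      toList := [(1, .ofAdd 1), (-1, .ofAdd 1), (1, .ofAdd (-1)), (-1, .ofAdd (-1))]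
      chain := by
        have h1 := not_mem_range 2 (by norm_num) _ (.inl rfl)
        have h2 := not_mem_range 3 (by norm_num) _ (.inl rfl)
        simp [HNNExtension.toSubgroup, h1, h2, -MonoidHom.mem_range] }
  have hw : w.prod hnnIso = 1 := by
    rw [← h2]
    simp [w, HNNExtension.NormalWord.ReducedWord.prod, hx, hy, mul_assoc]
  have := HNNExtension.ReducedWord.toList_eq_nil_of_mem_of_range hnnIso w (by rw [hw]; exact one_mem _)
  simp [w] at this

/-! ### The isomorphism -/

theorem gbar_rel : (PresentedGroup.of 1 : GBar) = ⁅(PresentedGroup.of 0 : GBar), PresentedGroup.of 1⁆ ^ 2 := by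
  have h : PresentedGroup.mk gbarRels (FreeGroup.of 1 * (⁅(FreeGroup.of 0 : FreeGroup (Fin 2)), FreeGroup.of 1⁆ ^ 2)⁻¹) = 1 :=
    (QuotientGroup.eq_one_iff _).2 (Subgroup.subset_normalClosure rfl)
  simp only [map_mul, map_inv, map_pow, map_commutatorElement] at h
  exact mul_inv_eq_one.1 h

theorem gbar_lift {H : Type*} [Group H] (a b : H) (h : b = ⁅a, b⁆ ^ 2) :
    ∃ f : GBar →* H, f (PresentedGroup.of 0) = a ∧ f (PresentedGroup.of 1) = b := by
  refine ⟨PresentedGroup.toGroup (f := ![a, b]) ?_, ?_, ?_⟩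
  · rintro r rfl
    simp only [map_mul, map_inv, map_pow, map_commutatorElement]
    simp [← h]
  · simp
  · simp

theorem conj_eq : bsX * bsY ^ 2 * bsX⁻¹ = bsY ^ 3 := by
  rw [bs_rel]; group

theorem bs_comm : ⁅bsX, bsY ^ 2⁆ = bsY := by
  rw [commutatorElement_def, conj_eq]; group

theorem bs_comm4 : ⁅bsX, bsY ^ 4⁆ = bsY ^ 2 := by
  have : bsX * bsY ^ 4 * bsX⁻¹ = (bsX * bsY ^ 2 * bsX⁻¹) ^ 2 := by rw [conj_pow, ← pow_mul]
  rw [commutatorElement_def, this, conj_eq]; group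

theorem exists_iso : ∃ e : BSGroup ≃* GBar, e bsX = PresentedGroup.of 0 ∧
    e bsY = ⁅(PresentedGroup.of 0 : GBar), PresentedGroup.of 1⁆ := by
  have hr := gbar_rel
  obtain ⟨f, hf0, hf1⟩ := bs_lift (PresentedGroup.of 0 : GBar)
    ⁅(PresentedGroup.of 0 : GBar), PresentedGroup.of 1⁆ (by
      generalize hc : ⁅(PresentedGroup.of 0 : GBar), (PresentedGroup.of 1 : GBar)⁆ = c at hr ⊢
      rw [commutatorElement_def, hr] at hc
      have : c ^ 3 = c * c ^ 2 := pow_succ' c 2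
      rw [this]; nth_rw 2 [← hc]; group)
  obtain ⟨g, hg0, hg1⟩ := gbar_lift bsX (bsY ^ 2) (by rw [bs_comm])
  refine ⟨MonoidHom.toMulEquiv f g ?_ ?_, hf0, hf1⟩
  · apply bs_hom_ext
    · simp [hf0, hg0]
    · simp [hf1, hg0, hg1, map_commutatorElement, bs_comm]
  · apply PresentedGroup.ext
    intro i
    fin_cases i
    · simp [hf0, hg0]
    · simp [hf1, hg1, ← hr]

/-! ### Freeness -/

theorem exists_equivariant {A : Type} [MulAction BSGroup A]
    (hA : ∀ (a : A) (n : ℤ), bsY ^ n • a = a → n = 0) :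
    ∃ N : A → ℤ, ∀ (b : A) (n : ℤ), N (bsY ^ (3 * n) • b) = N b + n := by
  classical
  let S : Setoid A :=
    { r := fun a b => ∃ n : ℤ, bsY ^ (3 * n) • a = b
      iseqv := by
        refine ⟨fun a => ⟨0, by simp⟩, ?_, ?_⟩
        · rintro a b ⟨n, rfl⟩
          exact ⟨-n, by rw [smul_smul, ← zpow_add]; simp⟩
        · rintro a b c ⟨n, rfl⟩ ⟨m, rfl⟩
          exact ⟨m + n, by rw [smul_smul, ← zpow_add]; ring_nf⟩ }
  have hout : ∀ a : A, ∃ n : ℤ, bsY ^ (3 * n) • (Quotient.mk S a).out = a :=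
    fun a => Quotient.exact (Quotient.out_eq (Quotient.mk S a))
  choose N hN using hout
  refine ⟨N, fun b n => ?_⟩
  have h1 : Quotient.mk S (bsY ^ (3 * n) • b) = Quotient.mk S b :=
    (Quotient.sound (s := S) ⟨n, rfl⟩).symm
  have h2 := hN (bsY ^ (3 * n) • b)
  rw [h1] at h2
  have h3 := hN b
  generalize (Quotient.mk S b).out = r at h2 h3
  generalize N (bsY ^ (3 * n) • b) = m at h2 ⊢
  generalize N b = k at h3 ⊢
  subst h3
  have h4 := hA r (-(3 * n + 3 * k) + 3 * m) (by
    rw [zpow_add, mul_smul, h2, smul_smul, smul_smul, ← zpow_add, ← zpow_add]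
    have : -(3 * n + 3 * k) + 3 * n + 3 * k = 0 := by ring
    rw [this]; simp)
  omega

open CategoryTheory CategoryTheory.ActionCategory

abbrev WR (A X : Type) [MulAction BSGroup A] [Group X] := (A → X) ⋊[mulAutArrow] BSGroup

section
variable {A X : Type} [MulAction BSGroup A] [Group X]

theorem WR_mul_left (p q : WR A X) (b : A) :
    (p * q).left b = p.left b * q.left (p.right⁻¹ • b) := rfl

theorem WR_zpow_right (p : WR A X) (n : ℤ) : (p ^ n).right = p.right ^ n :=
  map_zpow SemidirectProduct.rightHom p n

theorem WR_formula (x y : WR A X) (hx : x.right = bsX) (hy : y.right = bsY)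
    (h : x * y ^ 2 = y ^ 3 * x) (n : ℤ) (b : A) :
    x.left b = (y ^ (3 * n)).left b * x.left ((bsY ^ (3 * n))⁻¹ • b) *
      ((y ^ (2 * n)).left (bsX⁻¹ • b))⁻¹ := by
  have h : SemiconjBy x (y ^ 2) (y ^ 3) := h
  have h2 := h.zpow_right n
  rw [← zpow_natCast, ← zpow_natCast, ← zpow_mul, ← zpow_mul] at h2
  have h3 : x * y ^ (2 * n) = y ^ (3 * n) * x := h2
  have h4 := congrArg (fun p => p.left b) h3
  simp only [WR_mul_left, WR_zpow_right, hx, hy] at h4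
  rw [← h4]; simp

theorem WR_exists (N : A → ℤ) (hN : ∀ (b : A) (n : ℤ), N (bsY ^ (3 * n) • b) = N b + n)
    (u : A → X) (v : A → X) :
    ∃ x : WR A X, x.right = bsX ∧ (∀ b, N b = 0 → x.left b = v b) ∧
      x * (⟨u, bsY⟩ : WR A X) ^ 2 = (⟨u, bsY⟩ : WR A X) ^ 3 * x := by
  set y : WR A X := ⟨u, bsY⟩ with hy
  have hyr : y.right = bsY := rfl
  refine ⟨⟨fun b => (y ^ (3 * N b)).left b * v ((bsY ^ (3 * N b))⁻¹ • b) *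
      ((y ^ (2 * N b)).left (bsX⁻¹ • b))⁻¹, bsX⟩, rfl, ?_, ?_⟩
  · intro b hb
    simp [hb]
  · apply SemidirectProduct.ext
    · funext b
      have hr2 : (y ^ 2).right = bsY ^ (2 : ℤ) := WR_zpow_right y 2
      have hr3 : (y ^ 3).right = bsY ^ (3 : ℤ) := WR_zpow_right y 3
      rw [WR_mul_left, WR_mul_left, hr3]
      dsimp only
      have e1 : (bsY ^ (3 : ℤ))⁻¹ • b = bsY ^ (3 * (-1) : ℤ) • b := by simp
      have e2 : N ((bsY ^ (3 : ℤ))⁻¹ • b) = N b - 1 := by rw [e1, hN]; ring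
      rw [e2]
      generalize N b = n
      have e3 : (bsY ^ (3 * (n - 1)))⁻¹ • (bsY ^ (3 : ℤ))⁻¹ • b = (bsY ^ (3 * n))⁻¹ • b := by
        rw [smul_smul, ← mul_inv_rev, ← zpow_add]; ring_nf
      have e4 : bsX⁻¹ • (bsY ^ (3 : ℤ))⁻¹ • b = (bsY ^ (2 : ℤ))⁻¹ • bsX⁻¹ • b := by
        rw [smul_smul, smul_smul, ← mul_inv_rev, ← mul_inv_rev]
        congr 2
        exact (bs_rel_zpow 1).symm
      have e5 : (y ^ (3 * n)).left b =
          (y ^ 3).left b * (y ^ (3 * (n - 1))).left ((bsY ^ (3 : ℤ))⁻¹ • b) := by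
        have hk : y ^ (3 * n) = y ^ 3 * y ^ (3 * (n - 1)) := by
          rw [← zpow_natCast, ← zpow_add]; congr 1; push_cast; ring
        rw [← hr3, ← WR_mul_left, hk]
      have e6 : (y ^ (2 * n)).left (bsX⁻¹ • b) =
          (y ^ 2).left (bsX⁻¹ • b) *
            (y ^ (2 * (n - 1))).left ((bsY ^ (2 : ℤ))⁻¹ • bsX⁻¹ • b) := by
        have hk : y ^ (2 * n) = y ^ 2 * y ^ (2 * (n - 1)) := by
          rw [← zpow_natCast, ← zpow_add]; congr 1; push_cast; ring
        rw [← hr2, ← WR_mul_left, hk]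
      rw [e3, e4, e5, e6]
      group
    · have hr2 : (y ^ 2).right = bsY ^ 2 := by simpa using WR_zpow_right y 2
      have hr3 : (y ^ 3).right = bsY ^ 3 := by simpa using WR_zpow_right y 3
      rw [SemidirectProduct.mul_right, SemidirectProduct.mul_right, hr2, hr3]
      exact bs_rel
end

def bsGen : Fin 2 → BSGroup := PresentedGroup.of

@[reducible]
noncomputable def freeGroupoid {A : Type} [MulAction BSGroup A] (N : A → ℤ)
    (hN : ∀ (b : A) (n : ℤ), N (bsY ^ (3 * n) • b) = N b + n) :
    IsFreeGroupoid (ActionCategory BSGroup A) where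
  quiverGenerators :=
    ⟨fun a b => { e : Fin 2 // bsGen e • a.back = b.back ∧ (e = 0 → N b.back = 0) }⟩
  of := fun (e : Subtype _) => ⟨bsGen e.1, e.2.1⟩
  unique_lift := by
    classical
    intro X _ f
    let u : A → X := fun b => @f ⟨(), _⟩ ⟨(), b⟩ ⟨1, smul_inv_smul _ b, by simp⟩
    let v : A → X := fun b => if h : N b = 0 then
      @f ⟨(), _⟩ ⟨(), b⟩ ⟨0, smul_inv_smul _ b, fun _ => h⟩ else 1
    obtain ⟨x, hxr, hxv, hxy⟩ := WR_exists N hN u v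
    obtain ⟨F', hFx, hFy⟩ := bs_lift x (⟨u, bsY⟩ : WR A X) hxy
    have sane : ∀ g, (F' g).right = g := by
      suffices SemidirectProduct.rightHom.comp F' = MonoidHom.id _ by
        exact DFunLike.ext_iff.mp this
      apply bs_hom_ext
      · rw [MonoidHom.comp_apply, hFx]; exact hxr
      · rw [MonoidHom.comp_apply, hFy]; rfl
    refine ⟨uncurry F' sane, ?_, ?_⟩
    · rintro ⟨⟨⟩, a : A⟩ ⟨⟨⟩, b⟩ ⟨e, h : bsGen e • a = b, h0⟩
      change (F' (bsGen e)).left _ = _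
      cases inv_smul_eq_iff.mpr h.symm
      have he : e = 0 ∨ e = 1 := by fin_cases e <;> simp
      rcases he with rfl | rfl
      · have h0' : N b = 0 := h0 rfl
        change (F' bsX).left b = _
        rw [hFx, hxv b h0']
        exact dif_pos h0'
      · change (F' bsY).left b = _
        rw [hFy]
    · intro E hE
      have hy' : curry E bsY = ⟨u, bsY⟩ := by
        ext b
        · exact hE ⟨(), bsY⁻¹ • b⟩ ⟨(), b⟩ ⟨1, smul_inv_smul _ b, by simp⟩
        · rfl
      have hv' : ∀ b, N b = 0 → (curry E bsX).left b = v b := by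
        intro b hb
        refine Eq.trans ?_ (dif_pos hb).symm
        exact hE ⟨(), bsX⁻¹ • b⟩ ⟨(), b⟩ ⟨0, smul_inv_smul _ b, fun _ => hb⟩
      have hrel : curry E bsX * curry E bsY ^ 2 = curry E bsY ^ 3 * curry E bsX := by
        rw [← map_pow, ← map_pow, ← map_mul, ← map_mul, bs_rel]
      have : curry E = F' := by
        apply bs_hom_ext
        · rw [hFx]
          apply SemidirectProduct.ext
          · funext b
            rw [WR_formula (curry E bsX) (curry E bsY) rfl rfl hrel (N b) b,
              WR_formula x ⟨u, bsY⟩ hxr rfl hxy (N b) b, hy']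
            have hz : N ((bsY ^ (3 * N b))⁻¹ • b) = 0 := by
              have := hN b (- N b)
              rw [← zpow_neg, ← mul_neg, this]; ring
            rw [hv' _ hz, hxv _ hz]
          · rw [hxr]; rfl
        · rw [hFy, hy']
      apply Functor.hext
      · intro
        apply Unit.ext
      · refine ActionCategory.cases ?_
        intro t g
        subst this
        exact heq_of_eq rfl

theorem free_ker {H : Type*} [Group H] (φ : BSGroup →* H) (h : ∀ n : ℤ, φ bsY ^ n = 1 → n = 0) :
    IsFreeGroup φ.ker := by
  obtain ⟨N, hN⟩ := exists_equivariant (A := BSGroup ⧸ φ.ker) (by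
    intro a n ha
    induction a using QuotientGroup.induction_on with
    | H g =>
      have h1 : ((bsY ^ n * g : BSGroup) : BSGroup ⧸ φ.ker) = (g : BSGroup ⧸ φ.ker) := ha
      rw [QuotientGroup.eq, MonoidHom.mem_ker] at h1
      simp only [map_mul, map_inv, map_zpow, mul_inv_rev] at h1
      apply h
      rw [mul_assoc, inv_mul_eq_one] at h1
      have h2 : (φ bsY ^ n)⁻¹ * φ g = 1 * φ g := by rw [one_mul]; exact inv_mul_eq_iff_eq_mul.2 (by
        rw [← inv_mul_eq_iff_eq_mul]; exact h1.symm)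
      exact inv_eq_one.1 (mul_right_cancel h2))
  let _ := freeGroupoid N hN
  let r : ActionCategory BSGroup (BSGroup ⧸ φ.ker) :=
    objEquiv BSGroup (BSGroup ⧸ φ.ker) ↑(1 : BSGroup)
  have hconn : @IsConnected (ActionCategory BSGroup (BSGroup ⧸ φ.ker)) Groupoid.toCategory :=
    inferInstanceAs (IsConnected (ActionCategory BSGroup (BSGroup ⧸ φ.ker)))
  have hfree := @IsFreeGroupoid.endIsFreeOfConnectedFree
    (ActionCategory BSGroup (BSGroup ⧸ φ.ker)) _ hconn _ r
  let e := endMulEquivSubgroup φ.ker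
  let e' : @End (ActionCategory BSGroup (BSGroup ⧸ φ.ker)) Groupoid.toCategory.toCategoryStruct r ≃* φ.ker :=
    { toFun := e, invFun := e.symm, left_inv := e.left_inv, right_inv := e.right_inv,
      map_mul' := e.map_mul }
  exact IsFreeGroup.ofMulEquiv e'

/-- The assignment `x ↦ x`, `z ↦ y⁴` induces a (unique) homomorphism
`Ḡ = ⟨x, z | z = [x,z]²⟩ → G = ⟨x, y | x y² x⁻¹ = y³⟩`; it is surjective
and its kernel `K` is nontrivial and free. -/
theorem gbar_to_bs_kernel_nontrivial_free :
    (∃ φ : GBar →* BSGroup,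
        φ (PresentedGroup.of 0) = bsX ∧ φ (PresentedGroup.of 1) = bsY ^ 4) ∧
    ∀ φ : GBar →* BSGroup,
      φ (PresentedGroup.of 0) = bsX → φ (PresentedGroup.of 1) = bsY ^ 4 →
      Function.Surjective φ ∧ φ.ker ≠ ⊥ ∧ IsFreeGroup ↥φ.ker := by
  refine ⟨gbar_lift _ _ (by rw [bs_comm4, ← pow_mul]), ?_⟩
  intro φ h0 h1
  obtain ⟨e, he0, he1⟩ := exists_iso
  have hx : φ (e bsX) = bsX := by rw [he0, h0]
  have hy : φ (e bsY) = bsY ^ 2 := by rw [he1, map_commutatorElement, h0, h1, bs_comm4]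
  refine ⟨?_, ?_, ?_⟩
  · rw [← MonoidHom.range_eq_top, eq_top_iff]
    intro g _
    apply PresentedGroup.generated_by
    intro j
    have mx : bsX ∈ φ.range := ⟨_, hx⟩
    have my : bsY ^ 2 ∈ φ.range := ⟨_, hy⟩
    have my3 : bsY ^ 3 ∈ φ.range := by
      rw [← conj_eq]
      exact mul_mem (mul_mem mx my) (inv_mem mx)
    fin_cases j
    · exact mx
    · have : bsY = bsY ^ 3 * (bsY ^ 2)⁻¹ := by group
      have h : bsY ∈ φ.range := by
        rw [this]; exact mul_mem my3 (inv_mem my)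
      exact h
  · intro hb
    have hmem : e ((bsX * bsY * bsX⁻¹) * bsY * (bsX * bsY⁻¹ * bsX⁻¹) * bsY⁻¹) ∈ φ.ker := by
      rw [MonoidHom.mem_ker]
      simp only [map_mul, map_inv, hx, hy]
      have : bsX * (bsY ^ 2)⁻¹ * bsX⁻¹ = (bsY ^ 3)⁻¹ := by rw [← conj_eq]; group
      rw [this, conj_eq]; group
    rw [hb, Subgroup.mem_bot, map_eq_one_iff e e.injective] at hmem
    exact bs_ne hmem
  · have hf : IsFreeGroup (φ.comp e.toMonoidHom).ker := by
      apply free_ker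
      intro n hn
      have h2 : (bsY ^ 2) ^ n = 1 := by rw [← hy]; exact hn
      rw [← zpow_natCast, ← zpow_mul] at h2
      have := bsY_zpow _ h2
      push_cast at this
      omega
    have hk : (φ.comp e.toMonoidHom).ker.map e.toMonoidHom = φ.ker := by
      ext g
      rw [Subgroup.mem_map]
      constructor
      · rintro ⟨k, hk, rfl⟩
        exact hk
      · intro hg
        exact ⟨e.symm g, by simpa [MonoidHom.mem_ker] using hg, by simp⟩
    exact IsFreeGroup.ofMulEquiv ((e.subgroupMap (φ.comp e.toMonoidHom).ker).trans
      (MulEquiv.subgroupCongr hk))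
end
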